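/- Suppose g(r) = o(r^{-c}) as r → ∞ for some c > d. Fix γ > 0 and β₀ ∈ ℝ, and let (a_n) be a sequence of positive reals such that n·r̂_n(γ)^d·G(a_n) → e^{-β₀} as n → ∞. Let L_n^o be the length (in the toroidal metric) of the longest edge incident on the vertex 0 in the graph G_n^o(r̂_n(γ)) (with L_n^o := 0 if vertex 0 is isolated). Then P(L_n^o ≤ a_n·r̂_n(γ)) → exp(−e^{−β₀}) as n → ∞. -/

import Mathlib

open MeasureTheory ProbabilityTheory Filter Set

noncomputable section

namespace RCM

/-- The toroidal metric on the unit cube. -/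
def torusDist {d : ℕ} (x y : EuclideanSpace ℝ (Fin d)) : ℝ :=
  ⨅ z : Fin d → ℤ, ‖x - y - (WithLp.equiv 2 (Fin d → ℝ)).symm (fun i => (z i : ℝ))‖

/-- The half-open unit cube `S = (-1/2, 1/2]^d`. -/
def cube (d : ℕ) : Set (EuclideanSpace ℝ (Fin d)) :=
  {x | ∀ i, x i ∈ Set.Ioc (-(1/2) : ℝ) (1/2)}

/-- The Palm version of the random connection model: an extra vertex `0` is placed at the
origin (`X 0 = 0`), the points `X_i`, `i ≥ 1` are i.i.d. uniform on the cube, `N_n` are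
coupled Poisson counts and `U_{ij}`, `0 ≤ i < j`, are i.i.d. uniform edge variables, the
three families being mutually independent. -/
structure PalmModel (d : ℕ) {Ω : Type*} [MeasurableSpace Ω] (P : Measure Ω) where
  g : ℝ → ℝ
  α : ℝ
  X : ℕ → Ω → EuclideanSpace ℝ (Fin d)
  N : ℕ → Ω → ℕ
  U : ℕ → ℕ → Ω → ℝ
  g_antitone : AntitoneOn g (Set.Ici 0)
  g_mem : ∀ r : ℝ, 0 ≤ r → g r ∈ Set.Icc (0 : ℝ) 1
  g_integrable : MeasureTheory.Integrable (fun x : EuclideanSpace ℝ (Fin d) => g ‖x‖)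
  α_def : α = ∫ x : EuclideanSpace ℝ (Fin d), g ‖x‖
  α_pos : 0 < α
  X_zero : ∀ ω, X 0 ω = 0
  X_meas : ∀ i, Measurable (X i)
  X_unif : ∀ i : ℕ, 1 ≤ i → Measure.map (X i) P = volume.restrict (cube d)
  X_indep : iIndepFun
    (fun i : {i : ℕ // 1 ≤ i} => X i) P
  N_meas : ∀ n, Measurable (N n)
  N_mono : ∀ ω, Monotone fun n => N n ω
  N_poisson : ∀ n k : ℕ,
    P {ω | N n ω = k} = ENNReal.ofReal (Real.exp (-(n : ℝ)) * (n : ℝ) ^ k / k.factorial)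
  U_meas : ∀ i j, Measurable (U i j)
  U_unif : ∀ i j : ℕ, i < j →
    Measure.map (U i j) P = volume.restrict (Set.Icc (0 : ℝ) 1)
  U_indep : iIndepFun
    (fun p : {p : ℕ × ℕ // p.1 < p.2} => U p.1.1 p.1.2) P
  families_indep : iIndep
    (![MeasurableSpace.comap (fun ω => fun i : ℕ => X i ω) inferInstance,
       MeasurableSpace.comap (fun ω => fun n : ℕ => N n ω) inferInstance,
       MeasurableSpace.comap (fun ω => fun p : ℕ × ℕ => U p.1 p.2 ω) inferInstance]) P

variable {d : ℕ} {Ω : Type*} [MeasurableSpace Ω] {P : Measure Ω}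

/-- Adjacency in the graph `G_n^o(r)` on the vertex set `{0, 1, …, N_n}`. -/
def adjO (M : PalmModel d P) (n : ℕ) (r : ℝ) (ω : Ω) (i j : ℕ) : Prop :=
  i ≠ j ∧ i ≤ M.N n ω ∧ j ≤ M.N n ω ∧
    M.U (min i j) (max i j) ω ≤ M.g (torusDist (M.X i ω) (M.X j ω) / r)

/-- `r̂_n(γ)` defined by `r̂_n(γ)^d = γ log n / (α n)`. -/
def rhatP (M : PalmModel d P) (γ : ℝ) (n : ℕ) : ℝ :=
  (γ * Real.log n / (M.α * n)) ^ ((1 : ℝ) / d)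

/-- `L_n^o`, the length of the longest edge incident on the vertex `0` (placed at the
origin) in `G_n^o(r)`; it is `0` if the vertex `0` is isolated. -/
def palmLongestEdge (M : PalmModel d P) (n : ℕ) (r : ℝ) (ω : Ω) : ℝ :=
  sSup ({0} ∪ {t : ℝ | ∃ j, adjO M n r ω 0 j ∧ t = torusDist (M.X 0 ω) (M.X j ω)})

/-- `G(a) = ∫_{ℝ^d \ B(0,a)} g(|z|) dz`. -/
def Gtail (M : PalmModel d P) (a : ℝ) : ℝ :=
  ∫ z in (Metric.ball (0 : EuclideanSpace ℝ (Fin d)) a)ᶜ, M.g ‖z‖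

/-!
Whether an edge at the origin is longer than `b` is decided independently for each of the Poisson
many points, with probability `p = ∫ g(|x| / r)` over the points `x` of the cube outside
`B(0, b)`. Hence the number of such edges is Poisson with mean `n p`, and
`P(L_n^o ≤ b) = exp(-n p)` exactly. For `b = a r`, extending the integral from the cube to `ℝ^d`
replaces `p` by `r^d G(a)`, at the cost of an error of at most `r^d G(1 / (2 r))`. This error is
negligible for `r = r̂_n(γ)`: `n r^d` grows like `log n`, whereas `G(1 / (2 r))` is polynomially
small in `n` because `g` has a finite moment of positive order (Markov's inequality).
-/

open Asymptotics
open scoped NNReal Topology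

section Probability

variable {ι E F : Type*} [MeasurableSpace E] [MeasurableSpace F]

lemma iIndepFun_prodMk {X : ι → Ω → E} {Y : ι → Ω → F}
    (hX_meas : ∀ i, Measurable (X i)) (hY_meas : ∀ i, Measurable (Y i))
    (hX : iIndepFun X P) (hY : iIndepFun Y P)
    (hXY : IndepFun (fun ω i ↦ X i ω) (fun ω i ↦ Y i ω) P) :
    iIndepFun (fun i ω ↦ (X i ω, Y i ω)) P := by
  rw [iIndepFun_iff_iIndep]
  refine iIndepSets.iIndep (fun i ↦ ((hX_meas i).prodMk (hY_meas i)).comap_le) _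
    (fun i ↦ isPiSystem_prod.comap fun ω ↦ (X i ω, Y i ω))
    (fun i ↦ by rw [← generateFrom_prod, MeasurableSpace.comap_generateFrom]; rfl) ?_
  rw [iIndepSets_iff]
  intro S f hf
  have hrect : ∀ i ∈ S, ∃ A B, MeasurableSet A ∧ MeasurableSet B ∧
      f i = X i ⁻¹' A ∩ Y i ⁻¹' B := by
    intro i hi
    obtain ⟨_, ⟨A, hA, B, hB, rfl⟩, hAB⟩ := hf i hi
    exact ⟨A, B, hA, hB, hAB.symm⟩
  choose! A B hA hB hf_eq using hrect
  calc P (⋂ i ∈ S, f i)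
      = P ((⋂ i ∈ S, X i ⁻¹' A i) ∩ ⋂ i ∈ S, Y i ⁻¹' B i) := by
        rw [iInter₂_congr hf_eq]; simp only [iInter_inter_distrib]
    _ = P (⋂ i ∈ S, X i ⁻¹' A i) * P (⋂ i ∈ S, Y i ⁻¹' B i) := by
        have h := hXY.measure_inter_preimage_eq_mul _ _ (.pi S.countable_toSet hA)
          (.pi S.countable_toSet hB)
        simp only [Set.pi_def, preimage_iInter, Finset.mem_coe] at h
        exact h
    _ = ∏ i ∈ S, P (X i ⁻¹' A i) * P (Y i ⁻¹' B i) := by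
        rw [hX.measure_inter_preimage_eq_mul S hA, hY.measure_inter_preimage_eq_mul S hB,
          Finset.prod_mul_distrib]
    _ = ∏ i ∈ S, P (f i) := Finset.prod_congr rfl fun i hi ↦ by
        have hXYi : IndepFun (X i) (Y i) P :=
          hXY.comp (measurable_pi_apply i) (measurable_pi_apply i)
        rw [hf_eq i hi, hXYi.measure_inter_preimage_eq_mul _ _ (hA i hi) (hB i hi)]

lemma measureReal_prod_setOf_mem_and_le {μ : Measure E} {f : E → ℝ}
    (hf_meas : Measurable f) (hf : ∀ x, f x ∈ Icc (0 : ℝ) 1) {A : Set E} (hA : MeasurableSet A) :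
    (μ.prod (volume.restrict (Icc (0 : ℝ) 1))).real {q | q.1 ∈ A ∧ q.2 ≤ f q.1}
      = ∫ x in A, f x ∂μ := by
  have hS : MeasurableSet {q : E × ℝ | q.1 ∈ A ∧ q.2 ≤ f q.1} :=
    (measurable_fst hA).inter (measurableSet_le measurable_snd (hf_meas.comp measurable_fst))
  have hsection (x : E) : volume.restrict (Icc (0 : ℝ) 1)
      (Prod.mk x ⁻¹' {q : E × ℝ | q.1 ∈ A ∧ q.2 ≤ f q.1})
        = A.indicator (fun x ↦ ENNReal.ofReal (f x)) x := by
    by_cases hx : x ∈ A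
    · have : {u | u ≤ f x} ∩ Icc (0 : ℝ) 1 = Icc 0 (f x) := by grind
      simp [hx, this]
    · simp [hx]
  rw [integral_eq_lintegral_of_nonneg_ae (ae_of_all _ fun x ↦ (hf x).1)
    hf_meas.aestronglyMeasurable, Measure.real, Measure.prod_apply hS]
  simp_rw [hsection]
  rw [lintegral_indicator hA]

lemma measureReal_forall_mem_notMem {ν : Measure E} {ξ : ι → Ω → E}
    (hξ : ∀ i, HasLaw (ξ i) ν P) (hξ_indep : iIndepFun ξ P) {B : Set E} (hB : MeasurableSet B)
    (S : Finset ι) : P.real {ω | ∀ i ∈ S, ξ i ω ∉ B} = (1 - ν.real B) ^ S.card := by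
  have hcompl (i : ι) : P.real (ξ i ⁻¹' Bᶜ) = 1 - ν.real B := by
    have := hξ_indep.isProbabilityMeasure
    have : IsProbabilityMeasure ν := (hξ i).isProbabilityMeasure_iff.1 this
    rw [← probReal_compl_eq_one_sub hB]
    exact (hξ i).measureReal_eq hB.compl
  have hinter : {ω | ∀ i ∈ S, ξ i ω ∉ B} = ⋂ i ∈ S, ξ i ⁻¹' Bᶜ := by
    ext ω; simp
  simp_rw [hinter, measureReal_def, hξ_indep.measure_inter_preimage_eq_mul S fun _ _ ↦ hB.compl,
    ENNReal.toReal_prod, ← measureReal_def, hcompl, Finset.prod_const]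

lemma measureReal_forall_lt_notMem {ν : Measure E} {κ : Measure ℕ} {ξ : ℕ → Ω → E} {N : Ω → ℕ}
    (hξ : ∀ j, HasLaw (ξ j) ν P) (hξ_indep : iIndepFun ξ P) (hN : HasLaw N κ P)
    (hξN : IndepFun (fun ω j ↦ ξ j ω) N P) {B : Set E} (hB : MeasurableSet B) :
    P.real {ω | ∀ j < N ω, ξ j ω ∉ B} = ∫ k, (1 - ν.real B) ^ k ∂κ := by
  have := hξ_indep.isProbabilityMeasure
  have : IsProbabilityMeasure κ := hN.isProbabilityMeasure_iff.1 this
  have hξ_law : HasLaw (fun ω j ↦ ξ j ω) (P.map fun ω j ↦ ξ j ω) P :=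
    ⟨aemeasurable_pi_lambda _ fun j ↦ (hξ j).aemeasurable, rfl⟩
  have hlaw := (indepFun_iff_hasLaw_prodMk_prod hξ_law hN).1 hξN
  have hvoid (k : ℕ) : MeasurableSet {x : ℕ → E | ∀ j < k, x j ∉ B} := by measurability
  have hS : MeasurableSet {q : (ℕ → E) × ℕ | ∀ j < q.2, q.1 j ∉ B} := by measurability
  have hpow (k : ℕ) :
      (P.map fun ω j ↦ ξ j ω).real {x | ∀ j < k, x j ∉ B} = (1 - ν.real B) ^ k := by
    rw [← hξ_law.measureReal_eq (hvoid k)]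
    simpa using measureReal_forall_mem_notMem hξ hξ_indep hB (Finset.range k)
  rw [hlaw.measureReal_eq hS, Measure.real, Measure.prod_apply_symm hS,
    ← integral_toReal (Measurable.of_discrete.aemeasurable)
      (ae_of_all _ fun k ↦ measure_lt_top _ _)]
  exact integral_congr_ae (ae_of_all _ hpow)

lemma integral_pow_poissonMeasure (t : ℝ≥0) (s : ℝ) :
    ∫ k, s ^ k ∂(poissonMeasure t) = Real.exp (t * (s - 1)) := by
  rw [integral_poissonMeasure]
  have h := (NormedSpace.expSeries_div_hasSum_exp (t * s : ℝ)).mul_left (Real.exp (-t))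
  rw [← Real.exp_eq_exp_ℝ, ← Real.exp_add] at h
  calc ∑' k : ℕ, (Real.exp (-t) * t ^ k / k.factorial) • s ^ k
      = ∑' k : ℕ, Real.exp (-t) * ((t * s) ^ k / k.factorial) :=
        tsum_congr fun k ↦ by rw [smul_eq_mul, mul_pow]; ring
    _ = Real.exp (t * (s - 1)) := by rw [h.tsum_eq]; congr 1; ring

end Probability

section Analysis

variable {E : Type*} [NormedAddCommGroup E] [MeasurableSpace E] [BorelSpace E] {μ : Measure E}

lemma setIntegral_compl_ball_le_rpow_neg_mul {f : E → ℝ} {p R : ℝ} (hp : 0 ≤ p) (hR : 0 < R)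
    (hf : ∀ x, 0 ≤ f x) (hint : Integrable (fun x ↦ ‖x‖ ^ p * f x) μ) :
    ∫ x in (Metric.ball 0 R)ᶜ, f x ∂μ ≤ R ^ (-p) * ∫ x, ‖x‖ ^ p * f x ∂μ := by
  have hle : ∀ x ∈ (Metric.ball (0 : E) R)ᶜ, f x ≤ R ^ (-p) * (‖x‖ ^ p * f x) := by
    intro x hx
    have hRx : R ≤ ‖x‖ := by simpa using hx
    have h1 : 1 ≤ R ^ (-p) * ‖x‖ ^ p := by
      rw [Real.rpow_neg hR.le, ← div_eq_inv_mul, one_le_div (by positivity)]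
      gcongr
    simpa [mul_assoc] using mul_le_mul_of_nonneg_right h1 (hf x)
  have hnonneg (x : E) : 0 ≤ R ^ (-p) * (‖x‖ ^ p * f x) := by
    have := hf x
    positivity
  calc ∫ x in (Metric.ball 0 R)ᶜ, f x ∂μ
      ≤ ∫ x in (Metric.ball 0 R)ᶜ, R ^ (-p) * (‖x‖ ^ p * f x) ∂μ :=
        integral_mono_of_nonneg (ae_of_all _ hf) (hint.const_mul _).integrableOn
          (ae_restrict_of_forall_mem measurableSet_ball.compl hle)
    _ ≤ ∫ x, R ^ (-p) * (‖x‖ ^ p * f x) ∂μ :=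
        setIntegral_le_integral (hint.const_mul _) (ae_of_all _ hnonneg)
    _ = R ^ (-p) * ∫ x, ‖x‖ ^ p * f x ∂μ := integral_const_mul _ _

variable [NormedSpace ℝ E] [FiniteDimensional ℝ E] [μ.IsAddHaarMeasure]

lemma integrable_norm_rpow_mul_of_isBigO {f : E → ℝ} {p c : ℝ} (hp : 0 ≤ p)
    (hc : Module.finrank ℝ E + p < c) (hf : LocallyIntegrable f μ)
    (hfO : f =O[cocompact E] fun x ↦ ‖x‖ ^ (-c)) :
    Integrable (fun x ↦ ‖x‖ ^ p * f x) μ := by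
  have hloc : LocallyIntegrable (fun x ↦ ‖x‖ ^ p * f x) μ :=
    hf.continuous_mul (continuous_norm.rpow_const fun _ ↦ Or.inr hp)
  refine hloc.integrable_of_isBigO_cocompact (g := fun x ↦ (1 + ‖x‖) ^ (-(c - p))) ?_
    ((integrable_one_add_norm (by linarith)).integrableAtFilter _)
  refine ((isBigO_refl _ _).mul hfO).trans (IsBigO.of_bound (2 ^ (c - p)) ?_)
  filter_upwards [(tendsto_norm_cocompact_atTop (E := E)).eventually_ge_atTop 1] with x hx
  have hx0 : 0 < ‖x‖ := by linarith
  rw [← Real.rpow_add hx0, Real.norm_of_nonneg (by positivity),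
    Real.norm_of_nonneg (by positivity)]
  calc ‖x‖ ^ (p + -c) = 2 ^ (c - p) * (2 * ‖x‖) ^ (-(c - p)) := by
        rw [Real.mul_rpow two_pos.le hx0.le, ← mul_assoc, ← Real.rpow_add two_pos,
          add_neg_cancel, Real.rpow_zero, one_mul]
        congr 1
        ring
    _ ≤ 2 ^ (c - p) * (1 + ‖x‖) ^ (-(c - p)) := by
        gcongr 2 ^ (c - p) * ?_
        have : (0 : ℝ) ≤ Module.finrank ℝ E := Nat.cast_nonneg _
        exact Real.rpow_le_rpow_of_nonpos (by positivity) (by linarith) (by linarith)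

open scoped Pointwise in
lemma setIntegral_compl_ball_comp_inv_smul {F : Type*} [NormedAddCommGroup F] [NormedSpace ℝ F]
    (f : E → F) {r : ℝ} (hr : 0 < r) (a : ℝ) :
    ∫ x in (Metric.ball 0 (a * r))ᶜ, f (r⁻¹ • x) ∂μ
      = r ^ Module.finrank ℝ E • ∫ x in (Metric.ball 0 a)ᶜ, f x ∂μ := by
  have hset : r⁻¹ • (Metric.ball (0 : E) (a * r))ᶜ = (Metric.ball 0 a)ᶜ := by
    ext x
    rw [mem_smul_set_iff_inv_smul_mem₀ (inv_ne_zero hr.ne')]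
    simp [norm_smul, abs_of_pos hr, mul_comm a r, hr]
  rw [Measure.setIntegral_comp_smul_of_pos μ f _ (inv_pos.2 hr), hset, inv_pow, inv_inv]

lemma compl_ball_ae_eq_compl_closedBall (x : E) {r : ℝ} (hr : r ≠ 0) :
    ((Metric.ball x r)ᶜ : Set E) =ᵐ[μ] (Metric.closedBall x r)ᶜ := by
  refine (Metric.ball_subset_closedBall.eventuallyLE.antisymm ?_).compl
  rw [ae_le_set, Metric.closedBall_sdiff_ball]
  exact Measure.addHaar_sphere_of_ne_zero μ x hr

lemma tendsto_mul_log_div_rpow {κ q : ℝ} (hκ : 0 ≤ κ) (hq : 1 < q) :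
    Tendsto (fun x : ℝ ↦ x * (κ * (Real.log x / x)) ^ q) atTop (𝓝 0) := by
  have h := (isLittleO_log_rpow_rpow_atTop q (sub_pos.2 hq)).tendsto_div_nhds_zero.const_mul
    (κ ^ q)
  rw [mul_zero] at h
  refine h.congr' ?_
  filter_upwards [eventually_gt_atTop 1] with x hx
  have hx0 : 0 < x := by linarith
  have hlog := Real.log_pos hx
  rw [Real.mul_rpow hκ (by positivity), Real.div_rpow hlog.le hx0.le,
    Real.rpow_sub_one hx0.ne']
  field_simp

end Analysis

section Torus

lemma torusDist_nonneg (x y : EuclideanSpace ℝ (Fin d)) : 0 ≤ torusDist x y :=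
  Real.iInf_nonneg fun _ ↦ norm_nonneg _

lemma measurable_torusDist (x : EuclideanSpace ℝ (Fin d)) : Measurable (torusDist x) :=
  Measurable.iInf fun _ ↦ ((measurable_const.sub measurable_id).sub measurable_const).norm

lemma norm_le_norm_add_intCast {x : EuclideanSpace ℝ (Fin d)} (hx : x ∈ cube d)
    (z : Fin d → ℤ) : ‖x‖ ≤ ‖x + WithLp.toLp 2 (fun i ↦ (z i : ℝ))‖ := by
  rw [EuclideanSpace.norm_eq, EuclideanSpace.norm_eq]
  refine Real.sqrt_le_sqrt (Finset.sum_le_sum fun i _ ↦ ?_)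
  obtain ⟨hlower, hupper⟩ := hx i
  simp only [Real.norm_eq_abs, sq_abs, PiLp.add_apply]
  rcases lt_trichotomy (z i) 0 with hz | hz | hz
  · have : (z i : ℝ) ≤ -1 := by exact_mod_cast Int.le_sub_one_of_lt hz
    nlinarith
  · simp [hz]
  · have : (1 : ℝ) ≤ z i := by exact_mod_cast hz
    nlinarith

lemma torusDist_zero_left {x : EuclideanSpace ℝ (Fin d)} (hx : x ∈ cube d) :
    torusDist 0 x = ‖x‖ := by
  have hnorm (z : Fin d → ℤ) :
      ‖0 - x - (WithLp.equiv 2 (Fin d → ℝ)).symm (fun i ↦ (z i : ℝ))‖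
        = ‖x + WithLp.toLp 2 (fun i ↦ (z i : ℝ))‖ := by
    rw [zero_sub, ← norm_neg, neg_sub, sub_neg_eq_add, add_comm]
    rfl
  have hbdd : BddBelow (range fun z : Fin d → ℤ ↦ ‖x + WithLp.toLp 2 (fun i ↦ (z i : ℝ))‖) :=
    ⟨0, by rintro _ ⟨z, rfl⟩; exact norm_nonneg _⟩
  simp_rw [torusDist, hnorm]
  refine le_antisymm ((ciInf_le hbdd 0).trans_eq ?_) (le_ciInf (norm_le_norm_add_intCast hx))
  congr 1
  ext i
  simp

lemma measurableSet_cube : MeasurableSet (cube d) := by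
  have : cube d = ⋂ i, (fun x : EuclideanSpace ℝ (Fin d) ↦ x i) ⁻¹' Ioc (-(1 / 2)) (1 / 2) := by
    ext x; simp [cube]
  rw [this]
  exact .iInter fun i ↦ measurableSet_Ioc.preimage (by fun_prop)

lemma ball_subset_cube : Metric.ball (0 : EuclideanSpace ℝ (Fin d)) (1 / 2) ⊆ cube d := by
  intro x hx i
  have hxi : |x i| < 1 / 2 := (PiLp.norm_apply_le x i).trans_lt (by simpa using hx)
  exact ⟨(abs_lt.1 hxi).1, (abs_lt.1 hxi).2.le⟩

end Torus

section ConnectionFunction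

lemma PalmModel.measurable_g_comp (M : PalmModel d P) {E : Type*} [MeasurableSpace E]
    {f : E → ℝ} (hf : Measurable f) (hf_nonneg : ∀ x, 0 ≤ f x) :
    Measurable fun x ↦ M.g (f x) := by
  have hmono : Antitone fun t : ℝ ↦ M.g (max t 0) := fun s t hst ↦
    M.g_antitone (by simp) (by simp) (max_le_max_right 0 hst)
  simpa [Function.comp_def, hf_nonneg] using hmono.measurable.comp hf

lemma integrable_g_norm_div (M : PalmModel d P) {r : ℝ} (hr : 0 < r) :
    Integrable fun x : EuclideanSpace ℝ (Fin d) ↦ M.g (‖x‖ / r) := by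
  have h := M.g_integrable.comp_smul (inv_ne_zero hr.ne')
  simpa only [norm_smul, norm_inv, Real.norm_of_nonneg hr.le, ← div_eq_inv_mul] using h

lemma setIntegral_compl_ball_g_norm_div (M : PalmModel d P) {r : ℝ} (hr : 0 < r) (a : ℝ) :
    ∫ x in (Metric.ball (0 : EuclideanSpace ℝ (Fin d)) (a * r))ᶜ, M.g (‖x‖ / r)
      = r ^ d * Gtail M a := by
  have h := setIntegral_compl_ball_comp_inv_smul (μ := volume)
    (fun x : EuclideanSpace ℝ (Fin d) ↦ M.g ‖x‖) hr a
  simpa only [norm_smul, norm_inv, Real.norm_of_nonneg hr.le, ← div_eq_inv_mul,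
    finrank_euclideanSpace_fin, smul_eq_mul, Gtail] using h

lemma Gtail_isBigO (M : PalmModel d P) {c p : ℝ} (hp : 0 ≤ p) (hc : d + p < c)
    (hg : M.g =O[atTop] fun r : ℝ ↦ r ^ (-c)) : Gtail M =O[atTop] fun R : ℝ ↦ R ^ (-p) := by
  have hint : Integrable fun x : EuclideanSpace ℝ (Fin d) ↦ ‖x‖ ^ p * M.g ‖x‖ :=
    integrable_norm_rpow_mul_of_isBigO hp (by simpa using hc) M.g_integrable.locallyIntegrable
      (hg.comp_tendsto (tendsto_norm_cocompact_atTop (E := EuclideanSpace ℝ (Fin d))))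
  have hg_nonneg (x : EuclideanSpace ℝ (Fin d)) : 0 ≤ M.g ‖x‖ := (M.g_mem _ (norm_nonneg x)).1
  refine IsBigO.of_bound (∫ x : EuclideanSpace ℝ (Fin d), ‖x‖ ^ p * M.g ‖x‖) ?_
  filter_upwards [eventually_gt_atTop 0] with R hR
  rw [Gtail, Real.norm_of_nonneg (integral_nonneg hg_nonneg),
    Real.norm_of_nonneg (by positivity), mul_comm]
  exact setIntegral_compl_ball_le_rpow_neg_mul hp hR hg_nonneg hint

end ConnectionFunction

section LongEdgeProb

/-- The probability that a uniform point of the cube is joined to the origin by an edge longer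
than `b`, when the connection radius is `r`. -/
def longEdgeProb (M : PalmModel d P) (r b : ℝ) : ℝ :=
  ∫ x in cube d \ Metric.closedBall 0 b, M.g (‖x‖ / r)

lemma longEdgeProb_mul_le (M : PalmModel d P) {r : ℝ} (hr : 0 < r) (a : ℝ) :
    longEdgeProb M r (a * r) ≤ r ^ d * Gtail M a := by
  rw [← setIntegral_compl_ball_g_norm_div M hr]
  exact setIntegral_mono_set (integrable_g_norm_div M hr).integrableOn
    (ae_of_all _ fun x ↦ (M.g_mem _ (by positivity)).1)
    (LE.le.eventuallyLE fun x hx hx_ball ↦ hx.2 (Metric.ball_subset_closedBall hx_ball))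

lemma le_longEdgeProb_mul_add (M : PalmModel d P) {r a : ℝ} (hr : 0 < r) (ha : 0 < a) :
    r ^ d * Gtail M a ≤ longEdgeProb M r (a * r) + r ^ d * Gtail M (1 / (2 * r)) := by
  have hint := integrable_g_norm_div M hr
  have hhalf : 1 / (2 * r) * r = 1 / 2 := by field_simp
  have houtside : (Metric.closedBall (0 : EuclideanSpace ℝ (Fin d)) (a * r))ᶜ \ cube d
      ⊆ (Metric.ball 0 (1 / 2))ᶜ :=
    fun _ hx hx_ball ↦ hx.2 (ball_subset_cube hx_ball)
  calc r ^ d * Gtail M a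
      = ∫ x in (Metric.closedBall (0 : EuclideanSpace ℝ (Fin d)) (a * r))ᶜ, M.g (‖x‖ / r) := by
        rw [← setIntegral_compl_ball_g_norm_div M hr]
        exact setIntegral_congr_set (compl_ball_ae_eq_compl_closedBall _ (by positivity))
    _ = longEdgeProb M r (a * r)
        + ∫ x in (Metric.closedBall (0 : EuclideanSpace ℝ (Fin d)) (a * r))ᶜ \ cube d,
            M.g (‖x‖ / r) := by
        rw [← integral_inter_add_sdiff measurableSet_cube hint.integrableOn, inter_comm]
        rfl
    _ ≤ longEdgeProb M r (a * r) + r ^ d * Gtail M (1 / (2 * r)) := by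
        rw [← setIntegral_compl_ball_g_norm_div M hr, hhalf]
        exact add_le_add_right (setIntegral_mono_set hint.integrableOn
          (ae_of_all _ fun x ↦ (M.g_mem _ (by positivity)).1) houtside.eventuallyLE) _

lemma tendsto_mul_longEdgeProb (M : PalmModel d P) {r a : ℕ → ℝ} {l : ℝ}
    (hr : ∀ᶠ n in atTop, 0 < r n) (ha_pos : ∀ᶠ n in atTop, 0 < a n)
    (hfar : Tendsto (fun n : ℕ ↦ n * r n ^ d * Gtail M (1 / (2 * r n))) atTop (𝓝 0))
    (ha : Tendsto (fun n : ℕ ↦ n * r n ^ d * Gtail M (a n)) atTop (𝓝 l)) :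
    Tendsto (fun n : ℕ ↦ n * longEdgeProb M (r n) (a n * r n)) atTop (𝓝 l) := by
  have hlower := ha.sub hfar
  rw [sub_zero] at hlower
  refine tendsto_of_tendsto_of_tendsto_of_le_of_le' hlower ha ?_ ?_
  · filter_upwards [hr, ha_pos] with n hrn han
    rw [mul_assoc, mul_assoc, ← mul_sub]
    gcongr
    linarith [le_longEdgeProb_mul_add M hrn han]
  · filter_upwards [hr] with n hrn
    rw [mul_assoc]
    gcongr
    exact longEdgeProb_mul_le M hrn (a n)

end LongEdgeProb

section RhatP

lemma rhatP_pos (M : PalmModel d P) {γ : ℝ} (hγ : 0 < γ) {n : ℕ} (hn : 2 ≤ n) :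
    0 < rhatP M γ n := by
  have := Real.log_pos (Nat.one_lt_cast.2 hn)
  have := M.α_pos
  unfold rhatP
  positivity

lemma rhatP_rpow (M : PalmModel d P) {γ : ℝ} (hγ : 0 ≤ γ) (n : ℕ) (s : ℝ) :
    rhatP M γ n ^ s = (γ / M.α * (Real.log n / n)) ^ (s / d) := by
  have := M.α_pos
  have := Real.log_natCast_nonneg n
  rw [rhatP, ← Real.rpow_mul (by positivity), div_mul_div_comm, one_div_mul_eq_div]

lemma tendsto_rhatP (M : PalmModel d P) (hd : d ≠ 0) {γ : ℝ} (hγ : 0 ≤ γ) :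
    Tendsto (rhatP M γ) atTop (𝓝 0) := by
  have hlog : Tendsto (fun n : ℕ ↦ Real.log n / n) atTop (𝓝 0) :=
    Real.isLittleO_log_id_atTop.tendsto_div_nhds_zero.comp tendsto_natCast_atTop_atTop
  have hpow := (hlog.const_mul (γ / M.α)).rpow_const (p := 1 / d) (Or.inr (by positivity))
  rw [mul_zero, Real.zero_rpow (by positivity)] at hpow
  exact hpow.congr fun n ↦ by rw [← rhatP_rpow M hγ, Real.rpow_one]

lemma tendsto_natCast_mul_rhatP_rpow (M : PalmModel d P) (hd : d ≠ 0) {γ s : ℝ} (hγ : 0 ≤ γ)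
    (hs : d < s) : Tendsto (fun n : ℕ ↦ n * rhatP M γ n ^ s) atTop (𝓝 0) := by
  have hd_pos : (0 : ℝ) < d := by positivity
  have h := (tendsto_mul_log_div_rpow (div_nonneg hγ M.α_pos.le)
    ((one_lt_div hd_pos).2 hs)).comp tendsto_natCast_atTop_atTop
  exact h.congr fun n ↦ by rw [Function.comp_apply, rhatP_rpow M hγ]

lemma tendsto_mul_rhatP_pow_mul_Gtail (M : PalmModel d P) (hd : d ≠ 0) {c γ : ℝ}
    (hc : (d : ℝ) < c) (hg : M.g =O[atTop] fun r : ℝ ↦ r ^ (-c)) (hγ : 0 < γ) :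
    Tendsto (fun n : ℕ ↦ n * rhatP M γ n ^ d * Gtail M (1 / (2 * rhatP M γ n))) atTop (𝓝 0) := by
  have hr : ∀ᶠ n in atTop, 0 < rhatP M γ n := (eventually_ge_atTop 2).mono fun n ↦ rhatP_pos M hγ
  have hR : Tendsto (fun n ↦ 1 / (2 * rhatP M γ n)) atTop atTop := by
    simp_rw [one_div]
    refine Tendsto.inv_tendsto_nhdsGT_zero (tendsto_nhdsWithin_iff.2 ⟨?_, ?_⟩)
    · simpa using (tendsto_rhatP M hd hγ.le).const_mul 2
    · exact hr.mono fun n hrn ↦ mul_pos two_pos hrn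
  obtain ⟨p, hp, hpc⟩ : ∃ p : ℝ, 0 < p ∧ d + p < c := ⟨(c - d) / 2, by linarith, by linarith⟩
  have hO := (isBigO_refl (fun n : ℕ ↦ (n : ℝ) * rhatP M γ n ^ d) atTop).mul
    ((Gtail_isBigO M hp.le hpc hg).comp_tendsto hR)
  refine hO.trans_tendsto ?_
  have hpow := (tendsto_natCast_mul_rhatP_rpow M hd hγ.le (lt_add_of_pos_right _ hp)).const_mul
    (2 ^ p)
  rw [mul_zero] at hpow
  refine hpow.congr' ?_
  filter_upwards [hr] with n hrn
  rw [Function.comp_apply, one_div, Real.inv_rpow (by positivity), Real.rpow_neg (by positivity),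
    inv_inv, Real.mul_rpow two_pos.le hrn.le, Real.rpow_add hrn, Real.rpow_natCast]
  ring

end RhatP

section PalmModel

lemma PalmModel.isProbabilityMeasure (M : PalmModel d P) : IsProbabilityMeasure P :=
  M.X_indep.isProbabilityMeasure

lemma PalmModel.hasLaw_N (M : PalmModel d P) (n : ℕ) : HasLaw (M.N n) (poissonMeasure n) P where
  aemeasurable := (M.N_meas n).aemeasurable
  map_eq := Measure.ext_of_singleton fun k ↦ by
    rw [Measure.map_apply (M.N_meas n) (measurableSet_singleton k), poissonMeasure_singleton]
    exact M.N_poisson n k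

/-- The position of vertex `j + 1` together with the mark of its potential edge to the origin. -/
def PalmModel.markedPoint (M : PalmModel d P) (j : ℕ) (ω : Ω) : EuclideanSpace ℝ (Fin d) × ℝ :=
  (M.X (j + 1) ω, M.U 0 (j + 1) ω)

lemma PalmModel.indepFun_X_U (M : PalmModel d P) :
    IndepFun (fun ω i ↦ M.X i ω) (fun ω (p : ℕ × ℕ) ↦ M.U p.1 p.2 ω) P :=
  M.families_indep.indep (i := 0) (j := 2) (by decide)

lemma PalmModel.indepFun_X_U_succ (M : PalmModel d P) :
    IndepFun (fun ω j ↦ M.X (j + 1) ω) (fun ω j ↦ M.U 0 (j + 1) ω) P :=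
  M.indepFun_X_U.comp (φ := fun (x : ℕ → EuclideanSpace ℝ (Fin d)) (j : ℕ) ↦ x (j + 1))
    (ψ := fun (u : ℕ × ℕ → ℝ) (j : ℕ) ↦ u (0, j + 1)) (by fun_prop) (by fun_prop)

lemma PalmModel.hasLaw_markedPoint (M : PalmModel d P) (j : ℕ) :
    HasLaw (M.markedPoint j)
      ((volume.restrict (cube d)).prod (volume.restrict (Icc (0 : ℝ) 1))) P := by
  have := M.isProbabilityMeasure
  have hX : HasLaw (M.X (j + 1)) (volume.restrict (cube d)) P :=
    ⟨(M.X_meas _).aemeasurable, M.X_unif _ j.succ_pos⟩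
  have hU : HasLaw (M.U 0 (j + 1)) (volume.restrict (Icc (0 : ℝ) 1)) P :=
    ⟨(M.U_meas _ _).aemeasurable, M.U_unif _ _ j.succ_pos⟩
  exact (indepFun_iff_hasLaw_prodMk_prod hX hU).1
    (M.indepFun_X_U_succ.comp (measurable_pi_apply j) (measurable_pi_apply j))

lemma PalmModel.iIndepFun_markedPoint (M : PalmModel d P) : iIndepFun M.markedPoint P := by
  have hX : iIndepFun (fun j ↦ M.X (j + 1)) P :=
    M.X_indep.precomp (g := fun j ↦ ⟨j + 1, j.succ_pos⟩) fun i j hij ↦ by simpa using hij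
  have hU : iIndepFun (fun j ↦ M.U 0 (j + 1)) P :=
    M.U_indep.precomp (g := fun j ↦ ⟨(0, j + 1), j.succ_pos⟩) fun i j hij ↦ by simpa using hij
  exact iIndepFun_prodMk (fun j ↦ M.X_meas _) (fun j ↦ M.U_meas _ _) hX hU M.indepFun_X_U_succ

lemma PalmModel.indepFun_X_U_N (M : PalmModel d P) :
    IndepFun (fun ω ↦ (fun i ↦ M.X i ω, fun p : ℕ × ℕ ↦ M.U p.1 p.2 ω)) (fun ω n ↦ M.N n ω) P := by
  rw [IndepFun_iff_Indep]
  change Indep (MeasurableSpace.comap _ (MeasurableSpace.prod _ _)) _ P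
  rw [MeasurableSpace.comap_prodMk]
  have h := indep_iSup_of_disjoint (S := {0, 2}) (T := {1}) ?_ M.families_indep (by simp)
  · simpa [iSup_insert] using h
  · intro i
    fin_cases i
    · exact (measurable_pi_lambda _ M.X_meas).comap_le
    · exact (measurable_pi_lambda _ M.N_meas).comap_le
    · exact (measurable_pi_lambda _ fun p : ℕ × ℕ ↦ M.U_meas p.1 p.2).comap_le

lemma PalmModel.indepFun_markedPoint_N (M : PalmModel d P) (n : ℕ) :
    IndepFun (fun ω j ↦ M.markedPoint j ω) (M.N n) P :=
  M.indepFun_X_U_N.comp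
    (φ := fun (q : (ℕ → EuclideanSpace ℝ (Fin d)) × (ℕ × ℕ → ℝ)) (j : ℕ) ↦
      (q.1 (j + 1), q.2 (0, j + 1)))
    (by fun_prop) (measurable_pi_apply n)

end PalmModel

section LongestEdge

/-- The pairs (position, edge mark) producing an edge to the origin longer than `b`, when the
connection radius is `r`. -/
def longEdgeSet (M : PalmModel d P) (r b : ℝ) : Set (EuclideanSpace ℝ (Fin d) × ℝ) :=
  {q | b < torusDist 0 q.1 ∧ q.2 ≤ M.g (torusDist 0 q.1 / r)}

lemma palmLongestEdge_le_iff (M : PalmModel d P) (n : ℕ) (r : ℝ) {b : ℝ} (hb : 0 ≤ b) (ω : Ω) :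
    palmLongestEdge M n r ω ≤ b ↔ ∀ j < M.N n ω, M.markedPoint j ω ∉ longEdgeSet M r b := by
  have hfin : ({0} ∪ {t : ℝ | ∃ j, adjO M n r ω 0 j ∧
      t = torusDist (M.X 0 ω) (M.X j ω)}).Finite := by
    refine (finite_singleton 0).union (((finite_Iic (M.N n ω)).image
      fun j ↦ torusDist (M.X 0 ω) (M.X j ω)).subset ?_)
    rintro t ⟨j, hj, rfl⟩
    exact ⟨j, hj.2.2.1, rfl⟩
  rw [palmLongestEdge, csSup_le_iff hfin.bddAbove ⟨0, Or.inl rfl⟩]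
  constructor
  · rintro h j hj ⟨hlong, hmark⟩
    have hadj : adjO M n r ω 0 (j + 1) :=
      ⟨j.succ_ne_zero.symm, Nat.zero_le _, hj,
        by simpa [M.X_zero, PalmModel.markedPoint] using hmark⟩
    exact (h _ (Or.inr ⟨j + 1, hadj, rfl⟩)).not_gt (by rwa [M.X_zero])
  · rintro h t (rfl | ⟨j, ⟨hj0, -, hj, hmark⟩, rfl⟩)
    · exact hb
    · obtain ⟨j, rfl⟩ := Nat.exists_eq_succ_of_ne_zero hj0.symm
      by_contra! hlong
      exact h j hj ⟨by rwa [M.X_zero] at hlong,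
        by simpa [M.X_zero, PalmModel.markedPoint] using hmark⟩

lemma measurableSet_longEdgeSet (M : PalmModel d P) {r : ℝ} (hr : 0 < r) (b : ℝ) :
    MeasurableSet (longEdgeSet M r b) := by
  have hdist : Measurable fun q : EuclideanSpace ℝ (Fin d) × ℝ ↦ torusDist 0 q.1 :=
    (measurable_torusDist 0).comp measurable_fst
  have hg : Measurable fun q : EuclideanSpace ℝ (Fin d) × ℝ ↦ M.g (torusDist 0 q.1 / r) :=
    M.measurable_g_comp (hdist.div_const r) fun q ↦ div_nonneg (torusDist_nonneg _ _) hr.le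
  exact (measurableSet_lt measurable_const hdist).inter (measurableSet_le measurable_snd hg)

lemma measureReal_longEdgeSet (M : PalmModel d P) {r : ℝ} (hr : 0 < r) (b : ℝ) :
    ((volume.restrict (cube d)).prod (volume.restrict (Icc (0 : ℝ) 1))).real (longEdgeSet M r b)
      = longEdgeProb M r b := by
  have hnonneg (x : EuclideanSpace ℝ (Fin d)) : 0 ≤ torusDist 0 x / r :=
    div_nonneg (torusDist_nonneg _ _) hr.le
  have hlong : MeasurableSet {x : EuclideanSpace ℝ (Fin d) | b < torusDist 0 x} :=
    measurableSet_lt measurable_const (measurable_torusDist 0)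
  have hset : {x | b < torusDist 0 x} ∩ cube d = cube d \ Metric.closedBall 0 b := by
    ext x
    simp +contextual [and_comm, torusDist_zero_left]
  calc _ = ∫ x in {x | b < torusDist 0 x}, M.g (torusDist 0 x / r) ∂volume.restrict (cube d) :=
        measureReal_prod_setOf_mem_and_le
          (M.measurable_g_comp ((measurable_torusDist 0).div_const r) hnonneg)
          (fun x ↦ M.g_mem _ (hnonneg x)) hlong
    _ = ∫ x in cube d \ Metric.closedBall 0 b, M.g (torusDist 0 x / r) := by
        rw [Measure.restrict_restrict hlong, hset]
    _ = longEdgeProb M r b :=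
        setIntegral_congr_fun (measurableSet_cube.diff Metric.isClosed_closedBall.measurableSet)
          fun x hx ↦ by simp only [torusDist_zero_left hx.1]

lemma measureReal_palmLongestEdge_le (M : PalmModel d P) (n : ℕ) {r b : ℝ} (hr : 0 < r)
    (hb : 0 ≤ b) :
    P.real {ω | palmLongestEdge M n r ω ≤ b} = Real.exp (-(n * longEdgeProb M r b)) := by
  simp_rw [palmLongestEdge_le_iff M n r hb]
  rw [measureReal_forall_lt_notMem M.hasLaw_markedPoint M.iIndepFun_markedPoint (M.hasLaw_N n)
    (M.indepFun_markedPoint_N n) (measurableSet_longEdgeSet M hr b),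
    integral_pow_poissonMeasure, measureReal_longEdgeSet M hr]
  congr 1
  push_cast
  ring

end LongestEdge

theorem palmLongestEdge_tendsto_general (M : PalmModel d P) {r a : ℕ → ℝ} {l : ℝ}
    (hr : ∀ᶠ n in atTop, 0 < r n) (ha_pos : ∀ᶠ n in atTop, 0 < a n)
    (hfar : Tendsto (fun n : ℕ ↦ n * r n ^ d * Gtail M (1 / (2 * r n))) atTop (𝓝 0))
    (ha : Tendsto (fun n : ℕ ↦ n * r n ^ d * Gtail M (a n)) atTop (𝓝 l)) :
    Tendsto (fun n ↦ P.real {ω | palmLongestEdge M n (r n) ω ≤ a n * r n}) atTop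
      (𝓝 (Real.exp (-l))) := by
  refine (tendsto_mul_longEdgeProb M hr ha_pos hfar ha).neg.rexp.congr' ?_
  filter_upwards [hr, ha_pos] with n hrn han
  exact (measureReal_palmLongestEdge_le M n hrn (mul_pos han hrn).le).symm

/-- Proposition 2: if `n r̂_n(γ)^d G(a_n) → e^{-β₀}`, then
`P(L_n^o ≤ a_n r̂_n(γ)) → exp(-e^{-β₀})`. -/
theorem palmLongestEdge_tendsto (hd : 2 ≤ d) [IsProbabilityMeasure P] (M : PalmModel d P)
    {c : ℝ} (hc : (d : ℝ) < c)
    (hg : M.g =o[atTop] fun r : ℝ => r ^ (-c))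
    {γ : ℝ} (hγ : 0 < γ) (β₀ : ℝ) (a : ℕ → ℝ) (ha_pos : ∀ n, 0 < a n)
    (ha : Tendsto (fun n : ℕ => (n : ℝ) * rhatP M γ n ^ d * Gtail M (a n)) atTop
      (nhds (Real.exp (-β₀)))) :
    Tendsto (fun n : ℕ =>
        (P {ω | palmLongestEdge M n (rhatP M γ n) ω ≤ a n * rhatP M γ n}).toReal)
      atTop (nhds (Real.exp (-Real.exp (-β₀)))) :=
  palmLongestEdge_tendsto_general M
    ((eventually_ge_atTop 2).mono fun _ ↦ rhatP_pos M hγ) (.of_forall ha_pos)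
    (tendsto_mul_rhatP_pow_mul_Gtail M (by omega) hc hg.isBigO hγ) ha

end RCM
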